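/- Let V be a representation of the Yangian Y(gl_n). For any l ≥ 1, any indices c_1,…,c_l, d_1,…,d_l ∈ {1,…,n} and any i, j ∈ {1,…,l}, the series t_{c_i d_j}(u) commutes with the quantum minor t^{c_1⋯c_l}_{d_1⋯d_l}(v): every coefficient of the series t_{c_i d_j}(u) commutes (in End(V)) with every coefficient of the series t^{c_1⋯c_l}_{d_1⋯d_l}(v). -/

import Mathlib

/-- A representation of the Yangian `Y(gl_n)` on a complex vector space `V`:
a family of operators `T r i j` (`r ≥ 1`), with `T 0 i j = δ_{ij}·id`,
satisfying the defining relations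
`[T^{(r+1)}_{ij}, T^{(s)}_{kl}] − [T^{(r)}_{ij}, T^{(s+1)}_{kl}]
  = T^{(r)}_{kj} T^{(s)}_{il} − T^{(s)}_{kj} T^{(r)}_{il}`. -/
def IsYangianRep (n : ℕ) {V : Type*} [AddCommGroup V] [Module ℂ V]
    (T : ℕ → Fin n → Fin n → (V →ₗ[ℂ] V)) : Prop :=
  (∀ i j : Fin n, T 0 i j = if i = j then LinearMap.id else 0) ∧
  (∀ r s : ℕ, ∀ i j k l : Fin n,
    (T (r + 1) i j ∘ₗ T s k l - T s k l ∘ₗ T (r + 1) i j)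
      - (T r i j ∘ₗ T (s + 1) k l - T (s + 1) k l ∘ₗ T r i j)
    = T r k j ∘ₗ T s i l - T s k j ∘ₗ T r i l)

/-- Coefficients of the series `f(u − c)`, where `f(u) = Σ_r f_r u^{−r}` has
coefficients `f : ℕ → End(V)`: substitution is performed coefficientwise via
`(u−c)^{−r} = Σ_m (binom (m−1) (m−r)) c^{m−r} u^{−m}`. -/
noncomputable def shiftSer {V : Type*} [AddCommGroup V] [Module ℂ V]
    (c : ℂ) (f : ℕ → (V →ₗ[ℂ] V)) : ℕ → (V →ₗ[ℂ] V) :=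
  fun m => ∑ r ∈ Finset.range (m + 1),
    (((m - 1).choose (m - r) : ℂ) * c ^ (m - r)) • f r

/-- Cauchy product of two `End(V)`-valued series in `u⁻¹`. -/
noncomputable def mulSer {V : Type*} [AddCommGroup V] [Module ℂ V]
    (f g : ℕ → (V →ₗ[ℂ] V)) : ℕ → (V →ₗ[ℂ] V) :=
  fun m => ∑ r ∈ Finset.range (m + 1), f r ∘ₗ g (m - r)

/-- Product of a list of `End(V)`-valued series in `u⁻¹` (in the given order). -/
noncomputable def prodSer {V : Type*} [AddCommGroup V] [Module ℂ V] :
    List (ℕ → (V →ₗ[ℂ] V)) → ℕ → (V →ₗ[ℂ] V)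
  | [] => fun m => if m = 0 then LinearMap.id else 0
  | f :: rest => mulSer f (prodSer rest)

/-- The quantum minor `t^{a_1⋯a_l}_{b_1⋯b_l}(u)
= Σ_{σ ∈ S_l} sgn σ · t_{a_{σ(1)} b_1}(u) t_{a_{σ(2)} b_2}(u−1) ⋯
t_{a_{σ(l)} b_l}(u−l+1)`, as an `End(V)`-valued series in `u⁻¹` given by its
coefficients. -/
noncomputable def qminorSer {n : ℕ} {V : Type*} [AddCommGroup V] [Module ℂ V]
    (T : ℕ → Fin n → Fin n → (V →ₗ[ℂ] V)) (l : ℕ) (a b : Fin l → Fin n) :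
    ℕ → (V →ₗ[ℂ] V) :=
  fun m => ∑ σ : Equiv.Perm (Fin l),
    (((Equiv.Perm.sign σ : ℤ) : ℂ)) •
      prodSer (List.ofFn fun s : Fin l =>
        shiftSer ((s : ℕ) : ℂ) fun r => T r (a (σ s)) (b s)) m


namespace YangMinor

section Abstract

/-- Ordered product `L_{j-1} ... L_0`. -/
def lprod {E : Type*} [Monoid E] (L : ℕ → E) : ℕ → E
  | 0 => 1
  | j + 1 => L j * lprod L j

/-- Ordered product `R_0 ... R_{j-1}`. -/
def rprod {E : Type*} [Monoid E] (R : ℕ → E) : ℕ → E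
  | 0 => 1
  | j + 1 => rprod R j * R j

variable {K W : Type*} [CommRing K] [AddCommGroup W] [Module K W]

lemma left_aux (D : ℕ → K) (e : K) (hD : ∀ s, D (s + 1) = D s + e)
    (p : ℕ → Module.End K W) (A : Module.End K W) (i : ℕ)
    (hA : ∀ s < i, A * p s = -A) :
    D 0 • (A * lprod (fun s => D s • (1 : Module.End K W) - e • p s) i)
      = (∏ s ∈ Finset.range (i + 1), D s) • A := by
  induction i with
  | zero => simp [lprod]
  | succ i ih =>
    have h1 := ih (fun s hs => hA s (by omega))
    have h2 : A * (D i • (1 : Module.End K W) - e • p i) = D (i + 1) • A := by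
      rw [mul_sub, mul_smul_comm, mul_smul_comm, hA i (by omega), hD, mul_one]
      module
    rw [lprod, ← mul_assoc, h2, smul_mul_assoc, smul_comm, h1, smul_smul,
      Finset.prod_range_succ _ (i + 1), mul_comm]

lemma left_main (D : ℕ → K) (e : K) (hD : ∀ s, D (s + 1) = D s + e)
    (p : ℕ → Module.End K W) (A : Module.End K W) (i : ℕ)
    (hA : ∀ j < i, ∀ s < j, A * p j * p s = -(A * p j)) :
    D 0 • (A * lprod (fun s => D s • (1 : Module.End K W) - e • p s) i)
      = (∏ s ∈ Finset.range i, D s) •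
        (D 0 • A - e • ∑ s ∈ Finset.range i, A * p s) := by
  induction i with
  | zero => simp [lprod]
  | succ i ih =>
    have h1 := ih (fun j hj => hA j (by omega))
    have h2 := left_aux D e hD p (A * p i) i (hA i (by omega))
    rw [lprod, ← mul_assoc, mul_sub, mul_smul_comm, mul_smul_comm, sub_mul, smul_mul_assoc,
      smul_mul_assoc, smul_sub, smul_comm (D 0) (D i), smul_comm (D 0) e, mul_one, h1, h2,
      Finset.prod_range_succ, Finset.sum_range_succ]
    module

lemma right_aux (D : ℕ → K) (e : K) (hD : ∀ s, D (s + 1) = D s + e)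
    (p : ℕ → Module.End K W) (B : W) (i : ℕ)
    (hB : ∀ s < i, p s B = -B) :
    D 0 • (rprod (fun s => D s • (1 : Module.End K W) - e • p s) i B)
      = (∏ s ∈ Finset.range (i + 1), D s) • B := by
  induction i with
  | zero => simp [rprod]
  | succ i ih =>
    have h1 := ih (fun s hs => hB s (by omega))
    have h2 : (D i • (1 : Module.End K W) - e • p i) B = D (i + 1) • B := by
      rw [LinearMap.sub_apply, LinearMap.smul_apply, LinearMap.smul_apply,
        hB i (by omega), hD, Module.End.one_apply]
      module
    rw [rprod, Module.End.mul_apply, h2, map_smul, smul_comm, h1, smul_smul,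
      Finset.prod_range_succ _ (i + 1), mul_comm]

lemma right_main (D : ℕ → K) (e : K) (hD : ∀ s, D (s + 1) = D s + e)
    (p : ℕ → Module.End K W) (B : W) (i : ℕ)
    (hB : ∀ j < i, ∀ s < j, p s (p j B) = -(p j B)) :
    D 0 • (rprod (fun s => D s • (1 : Module.End K W) - e • p s) i B)
      = (∏ s ∈ Finset.range i, D s) •
        (D 0 • B - e • ∑ s ∈ Finset.range i, p s B) := by
  induction i with
  | zero => simp [rprod]
  | succ i ih =>
    have h1 := ih (fun j hj => hB j (by omega))
    have h2 := right_aux D e hD p (p i B) i (hB i (by omega))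
    rw [rprod, Module.End.mul_apply, LinearMap.sub_apply, LinearMap.smul_apply,
      LinearMap.smul_apply, map_sub, map_smul, map_smul, smul_sub, smul_comm (D 0) (D i),
      smul_comm (D 0) e, Module.End.one_apply, h1, h2,
      Finset.prod_range_succ, Finset.sum_range_succ]
    module

lemma chain (L R : ℕ → Module.End K W) (hc : ∀ i j, Commute (L i) (R j)) (F : ℕ → W) (m : ℕ)
    (hF : ∀ j < m, L j (F j) = R j (F (j + 1))) (i : ℕ) (hi : i ≤ m) :
    lprod L i (F 0) = rprod R i (F i) := by
  have hcc : ∀ i j, Commute (L i) (rprod R j) := by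
    intro i j
    induction j with
    | zero => exact Commute.one_right _
    | succ j ih => exact ih.mul_right (hc i j)
  induction i with
  | zero => rfl
  | succ i ih =>
    rw [lprod, rprod, Module.End.mul_apply, Module.End.mul_apply, ih (by omega), ← hF i (by omega),
      ← Module.End.mul_apply, ← Module.End.mul_apply, (hcc i i).eq]

lemma commute_rprod (A : Module.End K W) (R : ℕ → Module.End K W) (hc : ∀ j, Commute A (R j))
    (j : ℕ) : Commute A (rprod R j) := by
  induction j with
  | zero => exact Commute.one_right _
  | succ j ih => exact ih.mul_right (hc j)

end Abstract

section Tensor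

variable {K S I : Type*} [CommRing K] [Ring S] [Algebra K S] {m : ℕ}

/-- pull-back on upper indices -/
def up (K : Type*) {S X : Type*} [CommRing K] [Ring S] [Algebra K S] (φ : X → X) :
    Module.End K (X → X → S) where
  toFun F := fun x y => F (φ x) y
  map_add' _ _ := rfl
  map_smul' _ _ := rfl

/-- pull-back on lower indices -/
def low (K : Type*) {S X : Type*} [CommRing K] [Ring S] [Algebra K S] (φ : X → X) :
    Module.End K (X → X → S) where
  toFun F := fun x y => F x (φ y)
  map_add' _ _ := rfl
  map_smul' _ _ := rfl

lemma up_low {X : Type*} (φ ψ : X → X) :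
    Commute (up K φ : Module.End K (X → X → S)) (low K ψ) := rfl

/-- The exchange of the zeroth index with the `s`-th one. -/
def ex (s : ℕ) (x : I × (Fin m → I)) : I × (Fin m → I) :=
  if h : s < m then (x.2 ⟨s, h⟩, Function.update x.2 ⟨s, h⟩ x.1) else x

def perm (σ : Equiv.Perm (Fin m)) (x : I × (Fin m → I)) : I × (Fin m → I) := (x.1, x.2 ∘ σ)

lemma ex_of_lt (s : Fin m) (x : I × (Fin m → I)) :
    ex (s : ℕ) x = (x.2 s, Function.update x.2 s x.1) := by
  simp [ex]

lemma ex_ex (s j : Fin m) (h : s ≠ j) (x : I × (Fin m → I)) :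
    ex (s : ℕ) (ex (j : ℕ) x) = ex (j : ℕ) (perm (Equiv.swap s j) x) := by
  obtain ⟨k, a⟩ := x
  simp only [ex_of_lt, perm]
  refine Prod.ext ?_ ?_
  · simp [h]
  · funext r
    simp only [Function.update_apply, Function.comp_apply, Equiv.swap_apply_def]
    grind

lemma ex_ex' (s j : Fin m) (h : s ≠ j) (x : I × (Fin m → I)) :
    ex (j : ℕ) (ex (s : ℕ) x) = perm (Equiv.swap s j) (ex (j : ℕ) x) := by
  obtain ⟨k, a⟩ := x
  simp only [ex_of_lt, perm]
  refine Prod.ext ?_ ?_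
  · simp [h.symm]
  · funext r
    simp only [Function.update_apply, Function.comp_apply, Equiv.swap_apply_def]
    grind

/-- The antisymmetrizer on upper indices. -/
def anti (K : Type*) {S I : Type*} [CommRing K] [Ring S] [Algebra K S] {m : ℕ} :
    Module.End K ((I × (Fin m → I)) → (I × (Fin m → I)) → S) :=
  ∑ σ : Equiv.Perm (Fin m), (Equiv.Perm.sign σ : ℤ) • up K (perm σ)

lemma anti_apply (F : (I × (Fin m → I)) → (I × (Fin m → I)) → S) (x y) :
    anti K F x y = ∑ σ : Equiv.Perm (Fin m), (Equiv.Perm.sign σ : ℤ) • F (perm σ x) y := by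
  simp only [anti, LinearMap.sum_apply, Finset.sum_apply]
  rfl

lemma anti_up (π : Equiv.Perm (Fin m)) :
    (anti K : Module.End K ((I × (Fin m → I)) → (I × (Fin m → I)) → S)) * up K (perm π)
      = (Equiv.Perm.sign π : ℤ) • anti K := by
  ext F x y
  rw [Module.End.mul_apply, anti_apply, LinearMap.smul_apply, Pi.smul_apply, Pi.smul_apply,
    anti_apply, Finset.smul_sum]
  refine Fintype.sum_equiv (Equiv.mulRight π) _ _ fun σ => ?_
  have hs : (Equiv.Perm.sign π : ℤ) * (Equiv.Perm.sign π : ℤ) = 1 := by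
    rw [← Units.val_mul, Int.units_mul_self]; rfl
  simp only [Equiv.coe_mulRight, Equiv.Perm.sign_mul, Units.val_mul, smul_smul]
  rw [mul_comm (Equiv.Perm.sign σ : ℤ), ← mul_assoc, hs, one_mul]
  rfl

lemma anti_low (φ : (I × (Fin m → I)) → (I × (Fin m → I))) :
    Commute (anti K : Module.End K ((I × (Fin m → I)) → (I × (Fin m → I)) → S)) (low K φ) := by
  refine Commute.sum_left _ _ _ fun σ _ => ?_
  exact Commute.smul_left (up_low _ _) _

end Tensor

section Words

variable {K S I : Type*} [CommRing K] [Ring S] [Algebra K S] {m : ℕ}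

/-- list of factors -/
def wl (t : ℕ → I → I → S) (a b : Fin m → I) : List S :=
  List.ofFn fun s : Fin m => t s (a s) (b s)

def Q (t : ℕ → I → I → S) (a b : Fin m → I) : S :=
  ∑ σ : Equiv.Perm (Fin m), (Equiv.Perm.sign σ : ℤ) • (wl t (a ∘ σ) b).prod

@[simp] lemma wl_length (t : ℕ → I → I → S) (a b : Fin m → I) : (wl t a b).length = m := by
  simp [wl]

lemma wl_take (t : ℕ → I → I → S) (a b a' b' : Fin m → I) (j : ℕ)
    (h : ∀ s : Fin m, (s : ℕ) < j → a s = a' s ∧ b s = b' s) :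
    (wl t a b).take j = (wl t a' b').take j := by
  refine List.ext_getElem (by simp) fun i h1 h2 => ?_
  simp at h1
  have := h ⟨i, h1.2⟩ h1.1
  simp [wl, this.1, this.2]

lemma wl_drop (t : ℕ → I → I → S) (a b a' b' : Fin m → I) (j : ℕ)
    (h : ∀ s : Fin m, j ≤ (s : ℕ) → a s = a' s ∧ b s = b' s) :
    (wl t a b).drop j = (wl t a' b').drop j := by
  refine List.ext_getElem (by simp) fun i h1 h2 => ?_
  simp at h1
  have := h ⟨j + i, by omega⟩ (by simp)
  simp [wl, this.1, this.2]

/-- Word with `τ` in position `j`. -/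
def F (t : ℕ → I → I → S) (τ : I → I → S) (j : ℕ) (x y : I × (Fin m → I)) : S :=
  ((wl t x.2 y.2).take j).prod * τ x.1 y.1 * ((wl t x.2 y.2).drop j).prod

lemma prod_take (t : ℕ → I → I → S) (a b : Fin m → I) (j : Fin m) :
    ((wl t a b).take (j + 1)).prod = ((wl t a b).take j).prod * t j (a j) (b j) := by
  rw [List.prod_take_succ _ _ (by simp)]
  simp [wl]

lemma prod_drop (t : ℕ → I → I → S) (a b : Fin m → I) (j : Fin m) :
    ((wl t a b).drop j).prod = t j (a j) (b j) * ((wl t a b).drop (j + 1)).prod := by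
  rw [List.drop_eq_getElem_cons (by simp), List.prod_cons]
  simp [wl]

lemma step (t : ℕ → I → I → S) (τ : I → I → S) (D : ℕ → K) (e : K)
    (R2 : ∀ s i j k l, D s • (τ i j * t s k l - t s k l * τ i j)
      = e • (τ k j * t s i l - t s k j * τ i l)) (j : ℕ) (hj : j < m) :
    (D j • (1 : Module.End K ((I × (Fin m → I)) → (I × (Fin m → I)) → S))
        - e • up K (ex j) : Module.End K ((I × (Fin m → I)) → (I × (Fin m → I)) → S)) (F t τ j)
     = (D j • (1 : Module.End K ((I × (Fin m → I)) → (I × (Fin m → I)) → S))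
        - e • low K (ex j) : Module.End K ((I × (Fin m → I)) → (I × (Fin m → I)) → S))
          (F t τ (j + 1)) := by
  obtain ⟨j, rfl⟩ : ∃ i : Fin m, (i : ℕ) = j := ⟨⟨j, hj⟩, rfl⟩
  funext x y
  obtain ⟨k, a⟩ := x
  obtain ⟨l, b⟩ := y
  change D j • F t τ j (k, a) (l, b) - e • F t τ j (ex j (k, a)) (l, b)
    = D j • F t τ (j + 1) (k, a) (l, b) - e • F t τ (j + 1) (k, a) (ex j (l, b))
  simp only [ex_of_lt, F]
  rw [prod_take, prod_take, prod_drop, prod_drop]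
  rw [wl_take t (Function.update a j k) b a b j
      (fun s hs => ⟨Function.update_of_ne (by rintro rfl; omega) _ _, rfl⟩),
    wl_take t a (Function.update b j l) a b j
      (fun s hs => ⟨rfl, Function.update_of_ne (by rintro rfl; omega) _ _⟩),
    wl_drop t (Function.update a j k) b a b (j + 1)
      (fun s hs => ⟨Function.update_of_ne (by rintro rfl; omega) _ _, rfl⟩),
    wl_drop t a (Function.update b j l) a b (j + 1)
      (fun s hs => ⟨rfl, Function.update_of_ne (by rintro rfl; omega) _ _⟩)]
  simp only [Function.update_self]
  generalize ((wl t a b).take j).prod = P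
  generalize ((wl t a b).drop (j + 1)).prod = P'
  have h := congrArg (fun z => P * z * P') (R2 j k l (a j) (b j))
  simp only [mul_smul_comm, smul_mul_assoc, mul_sub, sub_mul, smul_sub] at h
  simp only [mul_assoc] at h ⊢
  rw [sub_eq_sub_iff_add_eq_add] at h ⊢
  rw [h, add_comm]

lemma word_swap (t : ℕ → I → I → S)
    (R1 : ∀ s i j k l, t s i j * t (s + 1) k l - t (s + 1) k l * t s i j
      = t s k j * t (s + 1) i l - t (s + 1) k j * t s i l)
    (a b : Fin m → I) (s : Fin m) (s' : Fin m) (h : (s' : ℕ) = s + 1) :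
    (wl t a b).prod - (wl t (a ∘ Equiv.swap s s') b).prod
     = - ((wl t a (b ∘ Equiv.swap s s')).prod
        - (wl t (a ∘ Equiv.swap s s') (b ∘ Equiv.swap s s')).prod) := by
  have key : ∀ a' b' : Fin m → I, (∀ r, r ≠ s → r ≠ s' → a' r = a r ∧ b' r = b r) →
      (wl t a' b').prod = ((wl t a b).take s).prod *
        (t s (a' s) (b' s) * t (s + 1) (a' s') (b' s')) * ((wl t a b).drop (s + 2)).prod := by
    intro a' b' hh
    rw [← List.prod_take_mul_prod_drop _ (s : ℕ), prod_drop, ← h, prod_drop, h, wl_take t a' b' a b,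
      wl_drop t a' b' a b]
    · simp only [mul_assoc]
    · intro r hr
      exact hh r (by rintro rfl; omega) (by rintro rfl; omega)
    · intro r hr
      exact hh r (by rintro rfl; omega) (by rintro rfl; omega)
  have hsw : ∀ r, r ≠ s → r ≠ s' → Equiv.swap s s' r = r := fun r h1 h2 =>
    Equiv.swap_apply_of_ne_of_ne h1 h2
  rw [key a b (by simp), key (a ∘ _) b (fun r h1 h2 => by simp [hsw r h1 h2]),
    key a (b ∘ _) (fun r h1 h2 => by simp [hsw r h1 h2]),
    key (a ∘ _) (b ∘ _) (fun r h1 h2 => by simp [hsw r h1 h2])]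
  simp only [Function.comp_apply, Equiv.swap_apply_left, Equiv.swap_apply_right, ← mul_sub,
    ← sub_mul]
  rw [← neg_mul, ← mul_neg]
  congr 2
  have h1 := R1 s (a s) (b s) (a s') (b s')
  have h2 := R1 s (a s) (b s') (a s') (b s)
  rw [sub_eq_iff_eq_add] at h1 h2
  rw [h1, h2]
  abel

lemma Q_upper (t : ℕ → I → I → S) (a b : Fin m → I) (π : Equiv.Perm (Fin m)) :
    Q t (a ∘ π) b = (Equiv.Perm.sign π : ℤ) • Q t a b := by
  rw [Q, Q, Finset.smul_sum]
  refine Fintype.sum_equiv (Equiv.mulLeft π) _ _ fun σ => ?_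
  have hs : (Equiv.Perm.sign π : ℤ) * (Equiv.Perm.sign π : ℤ) = 1 := by
    rw [← Units.val_mul, Int.units_mul_self]; rfl
  simp only [Equiv.coe_mulLeft, Equiv.Perm.sign_mul, Units.val_mul, smul_smul]
  rw [← mul_assoc, hs, one_mul]
  rfl

lemma Q_lower_adj (h2 : ∀ x : S, x + x = 0 → x = 0) (t : ℕ → I → I → S)
    (R1 : ∀ s i j k l, t s i j * t (s + 1) k l - t (s + 1) k l * t s i j
      = t s k j * t (s + 1) i l - t (s + 1) k j * t s i l)
    (a b : Fin m → I) (s : Fin m) (s' : Fin m) (h : (s' : ℕ) = s + 1) :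
    Q t a (b ∘ Equiv.swap s s') = - Q t a b := by
  have hne : s ≠ s' := by rintro rfl; omega
  have e : ∀ b : Fin m → I, Q t a b + Q t a b = ∑ σ : Equiv.Perm (Fin m),
      (Equiv.Perm.sign σ : ℤ) • ((wl t (a ∘ σ) b).prod
        - (wl t ((a ∘ σ) ∘ Equiv.swap s s') b).prod) := by
    intro b
    simp only [smul_sub, Finset.sum_sub_distrib]
    rw [sub_eq_add_neg]
    congr 1
    rw [← Finset.sum_neg_distrib, Q]
    refine Fintype.sum_equiv (Equiv.mulRight (Equiv.swap s s')) _ _ fun σ => ?_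
    have : (a ∘ ⇑(σ * Equiv.swap s s')) ∘ ⇑(Equiv.swap s s') = a ∘ σ := by
      funext r; simp
    rw [Equiv.coe_mulRight, this]
    simp [Equiv.Perm.sign_swap hne]
  rw [← sub_eq_zero, sub_neg_eq_add]
  apply h2
  rw [add_add_add_comm, e, e, ← Finset.sum_add_distrib]
  refine Finset.sum_eq_zero fun σ _ => ?_
  rw [← smul_add, word_swap t R1 (a ∘ σ) b s s' h]
  simp

lemma Q_lower (h2 : ∀ x : S, x + x = 0 → x = 0) (t : ℕ → I → I → S)
    (R1 : ∀ s i j k l, t s i j * t (s + 1) k l - t (s + 1) k l * t s i j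
      = t s k j * t (s + 1) i l - t (s + 1) k j * t s i l)
    (a b : Fin m → I) (π : Equiv.Perm (Fin m)) :
    Q t a (b ∘ π) = (Equiv.Perm.sign π : ℤ) • Q t a b := by
  cases m with
  | zero => 
    have : π = 1 := Subsingleton.elim _ _
    subst this; simp
  | succ m =>
    have hπ : π ∈ Submonoid.closure (Set.range fun i : Fin m => Equiv.swap i.castSucc i.succ) := by
      rw [Equiv.Perm.mclosure_swap_castSucc_succ]; trivial
    induction hπ using Submonoid.closure_induction generalizing b with
    | mem x hx =>
      obtain ⟨i, rfl⟩ := hx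
      simp only []
      rw [Q_lower_adj h2 t R1 a b _ _ (by simp), Equiv.Perm.sign_swap (by simp [Fin.ext_iff])]
      simp
    | one => simp
    | mul x y _ _ hx hy =>
      rw [Equiv.Perm.coe_mul, ← Function.comp_assoc, hy, hx, smul_smul, Equiv.Perm.sign_mul,
        Units.val_mul, mul_comm]

lemma Q_upper_zero (h2 : ∀ x : S, x + x = 0 → x = 0) (t : ℕ → I → I → S)
    (a b : Fin m → I) (i j : Fin m) (hij : i ≠ j) (h : a i = a j) : Q t a b = 0 := by
  have := Q_upper t a b (Equiv.swap i j)
  have e : a ∘ Equiv.swap i j = a := by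
    funext r
    simp only [Function.comp_apply, Equiv.swap_apply_def]
    grind
  rw [e, Equiv.Perm.sign_swap hij] at this
  apply h2
  nth_rw 1 [this]
  simp

lemma Q_lower_zero (h2 : ∀ x : S, x + x = 0 → x = 0) (t : ℕ → I → I → S)
    (R1 : ∀ s i j k l, t s i j * t (s + 1) k l - t (s + 1) k l * t s i j
      = t s k j * t (s + 1) i l - t (s + 1) k j * t s i l)
    (a b : Fin m → I) (i j : Fin m) (hij : i ≠ j) (h : b i = b j) : Q t a b = 0 := by
  have := Q_lower h2 t R1 a b (Equiv.swap i j)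
  have e : b ∘ Equiv.swap i j = b := by
    funext r
    simp only [Function.comp_apply, Equiv.swap_apply_def]
    grind
  rw [e, Equiv.Perm.sign_swap hij] at this
  apply h2
  nth_rw 1 [this]
  simp

lemma anti_F_last (t : ℕ → I → I → S) (τ : I → I → S) (x y : I × (Fin m → I)) :
    anti K (F t τ m) x y = Q t x.2 y.2 * τ x.1 y.1 := by
  rw [anti_apply, Q, Finset.sum_mul]
  refine Finset.sum_congr rfl fun σ _ => ?_
  rw [F, List.take_of_length_le (by simp), List.drop_of_length_le (by simp)]
  rw [smul_mul_assoc]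
  simp [perm]

lemma anti_F_zero (t : ℕ → I → I → S) (τ : I → I → S) (x y : I × (Fin m → I)) :
    anti K (F t τ 0) x y = τ x.1 y.1 * Q t x.2 y.2 := by
  rw [anti_apply, Q, Finset.mul_sum]
  refine Finset.sum_congr rfl fun σ _ => ?_
  rw [mul_smul_comm]
  simp [perm, F]

lemma anti_ex_F_zero (t : ℕ → I → I → S) (τ : I → I → S) (x y : I × (Fin m → I)) :
    ∑ s : Fin m, (anti K * up K (ex (s : ℕ)) :
      Module.End K ((I × (Fin m → I)) → (I × (Fin m → I)) → S)) (F t τ 0) x y =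
     ∑ s : Fin m, τ (x.2 s) y.1 * Q t (Function.update x.2 s x.1) y.2 := by
  simp only [Module.End.mul_apply, anti_apply, Q, Finset.mul_sum]
  rw [Finset.sum_comm, Finset.sum_comm (s := (Finset.univ : Finset (Fin m)))]
  refine Finset.sum_congr rfl fun σ _ => ?_
  refine Fintype.sum_equiv σ _ _ fun s => ?_
  change _ • F t τ 0 (ex s (perm σ x)) y = _
  have : Function.update (x.2 ∘ σ) s x.1 = Function.update x.2 (σ s) x.1 ∘ σ := by
    rw [Function.update_comp_eq_of_injective _ σ.injective]
  rw [mul_smul_comm]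
  simp [ex_of_lt, perm, F, this]

theorem core (h2 : ∀ x : S, x + x = 0 → x = 0) (t : ℕ → I → I → S) (τ : I → I → S)
    (D : ℕ → K) (e : K) (hD : ∀ s, D (s + 1) = D s + e)
    (hreg : ∀ s, ∀ x : S, D s • x = 0 → x = 0)
    (hreg' : ∀ x : S, (D 0 - e) • x = 0 → x = 0)
    (R1 : ∀ s i j k l, t s i j * t (s + 1) k l - t (s + 1) k l * t s i j
      = t s k j * t (s + 1) i l - t (s + 1) k j * t s i l)
    (R2 : ∀ s i j k l, D s • (τ i j * t s k l - t s k l * τ i j)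
      = e • (τ k j * t s i l - t s k j * τ i l))
    (a b : Fin m → I) (i j : Fin m) :
    τ (a i) (b j) * Q t a b = Q t a b * τ (a i) (b j) := by
  have hA : ∀ j < m, ∀ s < j, (anti K : Module.End K ((I × (Fin m → I)) → (I × (Fin m → I)) → S))
      * up K (ex j) * up K (ex s) = -(anti K * up K (ex j)) := by
    intro j hj s hs
    have := ex_ex (I := I) (⟨s, by omega⟩ : Fin m) ⟨j, hj⟩ (by simp; omega)
    have e1 : (up K (ex j) * up K (ex s) :
        Module.End K ((I × (Fin m → I)) → (I × (Fin m → I)) → S))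
        = up K (perm (Equiv.swap ⟨s, by omega⟩ ⟨j, hj⟩)) * up K (ex j) := by
      ext G x y
      exact congrArg (fun z => G z y) (this x)
    rw [mul_assoc, e1, ← mul_assoc, anti_up, Equiv.Perm.sign_swap (by simp; omega)]
    rw [Units.val_neg, Units.val_one, neg_smul, one_smul]
    rfl
  have hB : ∀ j < m, ∀ s < j, low K (ex s) (low K (ex j) (anti K (F (m := m) t τ m)))
      = -(low K (ex j) (anti K (F (m := m) t τ m))) := by
    intro j hj s hs
    have := ex_ex' (I := I) (⟨s, by omega⟩ : Fin m) ⟨j, hj⟩ (by simp; omega)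
    funext x y
    change anti K (F (m := m) t τ m) x (ex j (ex s y)) = - anti K (F (m := m) t τ m) x (ex j y)
    rw [show ex j (ex s y) = _ from this y, anti_F_last, anti_F_last, perm,
      Q_lower h2 t R1, Equiv.Perm.sign_swap (by simp; omega)]
    simp
  have hl := left_main D e hD (fun s => up K (ex s)) (anti K : Module.End K
    ((I × (Fin m → I)) → (I × (Fin m → I)) → S)) m hA
  have hr := right_main D e hD (fun s => low K (ex s)) (anti K (F (m := m) t τ m)) m hB
  have hch := chain (K := K) (fun s => D s • (1 : Module.End K
      ((I × (Fin m → I)) → (I × (Fin m → I)) → S)) - e • up K (ex s))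
    (fun s => D s • (1 : Module.End K
      ((I × (Fin m → I)) → (I × (Fin m → I)) → S)) - e • low K (ex s))
    (fun i j => by
      refine Commute.sub_left ?_ ?_
      · exact (Commute.one_left _).smul_left _
      · refine Commute.smul_left (Commute.sub_right ?_ ?_) _
        · exact (Commute.one_right _).smul_right _
        · exact (up_low _ _).smul_right _) (F (m := m) t τ) m (step t τ D e R2) m le_rfl
  have hc2 := commute_rprod (anti K) (fun s => D s • (1 : Module.End K
    ((I × (Fin m → I)) → (I × (Fin m → I)) → S)) - e • low K (ex s)) (fun j => by
      refine Commute.sub_right ?_ ?_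
      · exact (Commute.one_right _).smul_right _
      · exact (anti_low _).smul_right _) m
  have hl' := congrArg (fun z => z (F t τ 0)) hl
  simp only [LinearMap.smul_apply, Module.End.mul_apply] at hl'
  rw [hch, ← Module.End.mul_apply, hc2.eq, Module.End.mul_apply, hr] at hl'
  have hreg2 : ∀ i, ∀ x : S, (∏ s ∈ Finset.range i, D s) • x = 0 → x = 0 := by
    intro i
    induction i with
    | zero => simp
    | succ i ih =>
      intro x hx
      rw [Finset.prod_range_succ, mul_smul] at hx
      exact hreg _ _ (ih _ hx)
  have hfin := congrFun (congrFun hl' (a i, a)) (b j, b)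
  simp only [Pi.smul_apply] at hfin
  rw [← sub_eq_zero, ← smul_sub] at hfin
  have hfin := hreg2 _ _ hfin
  rw [Finset.sum_range, Finset.sum_range] at hfin
  simp only [Pi.sub_apply, Pi.smul_apply, LinearMap.sub_apply, LinearMap.smul_apply,
    LinearMap.sum_apply, Finset.sum_apply] at hfin
  rw [anti_ex_F_zero, anti_F_last, anti_F_zero] at hfin
  have hlow : ∀ s : Fin m, low K (ex (s : ℕ)) (anti K (F t τ m)) (a i, a) (b j, b)
      = Q t a (Function.update b s (b j)) * τ (a i) (b s) := by
    intro s
    change anti K (F t τ m) (a i, a) (ex s (b j, b)) = _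
    rw [anti_F_last, ex_of_lt]
  simp only [hlow] at hfin
  rw [Finset.sum_eq_single_of_mem j (Finset.mem_univ _) (fun s _ hs => by
      rw [Q_lower_zero h2 t R1 _ _ s j hs (by simp [Function.update_of_ne hs.symm]), zero_mul]),
    Finset.sum_eq_single_of_mem i (Finset.mem_univ _) (fun s _ hs => by
      rw [Q_upper_zero h2 t _ _ s i hs (by simp [Function.update_of_ne hs.symm]), mul_zero])] at hfin
  simp only [Function.update_eq_self] at hfin
  rw [← sub_eq_zero]
  apply hreg'
  rw [sub_smul, smul_sub, smul_sub]
  rw [← neg_eq_zero, ← hfin]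
  abel

end Words
end YangMinor

namespace YangMinor
section Concrete

open PowerSeries

variable {A : Type*} [Ring A] [Algebra ℂ A]

/-- The expansion of `(u - c)^{-r}`. -/
noncomputable def P (A : Type*) [Ring A] [Algebra ℂ A] (c : ℂ) (r : ℕ) : PowerSeries A :=
  PowerSeries.mk fun m =>
    if r ≤ m then algebraMap ℂ A (((m - 1).choose (m - r) : ℂ) * c ^ (m - r)) else 0

lemma central_of_coeff (p : PowerSeries A) (h : ∀ m x, coeff m p * x = x * coeff m p)
    (G : PowerSeries A) : p * G = G * p := by
  ext m
  rw [coeff_mul, coeff_mul, ← Finset.Nat.sum_antidiagonal_swap]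
  exact Finset.sum_congr rfl fun x _ => h _ _

lemma P_comm (c : ℂ) (r : ℕ) (G : PowerSeries A) : P A c r * G = G * P A c r := by
  refine central_of_coeff _ (fun m x => ?_) G
  simp only [P, coeff_mk]
  split_ifs
  · exact Algebra.commutes _ _
  · simp

lemma P_zero (c : ℂ) : P A c 0 = 1 := by
  ext m
  cases m with
  | zero => simp [P]
  | succ m => simp [P, coeff_one]

lemma P_succ (c : ℂ) (r : ℕ) : P A c (r + 1) - c • (X * P A c (r + 1)) = X * P A c r := by
  ext m
  cases m with
  | zero => simp [P]
  | succ m =>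
    rw [map_sub, PowerSeries.coeff_smul, coeff_succ_X_mul, coeff_succ_X_mul]
    simp only [P, coeff_mk]
    rcases lt_trichotomy m r with h | rfl | h
    · rw [if_neg (by omega), if_neg (by omega), if_neg (by omega)]; simp
    · simp
    · obtain ⟨d, rfl⟩ : ∃ d, m = r + 1 + d := ⟨m - r - 1, by omega⟩
      rw [if_pos (by omega), if_pos (by omega), if_pos (by omega)]
      rw [show r + 1 + d + 1 - 1 = (r + d) + 1 by omega,
        show r + 1 + d + 1 - (r + 1) = d + 1 by omega, show r + 1 + d - 1 = r + d by omega,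
        show r + 1 + d - (r + 1) = d by omega, show r + 1 + d - r = d + 1 by omega,
        Nat.choose_succ_succ, Algebra.smul_def, ← map_mul, ← map_sub]
      congr 1
      push_cast
      ring

lemma coeff_P_mul (c : ℂ) (r m : ℕ) (h : m < r) (G : PowerSeries A) :
    coeff m (P A c r * G) = 0 := by
  rw [coeff_mul]
  refine Finset.sum_eq_zero fun x hx => ?_
  have := Finset.HasAntidiagonal.mem_antidiagonal.1 hx
  rw [P, coeff_mk, if_neg (by omega), zero_mul]

/-- `∑ (v - c)^{-r} G_r`. -/
noncomputable def ev (c : ℂ) (G : ℕ → PowerSeries A) : PowerSeries A :=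
  PowerSeries.mk fun m => coeff m (∑ r ∈ Finset.range (m + 1), P A c r * G r)

lemma coeff_ev (c : ℂ) (G : ℕ → PowerSeries A) (m N : ℕ) (h : m < N) :
    coeff m (ev c G) = coeff m (∑ r ∈ Finset.range N, P A c r * G r) := by
  rw [ev, coeff_mk, map_sum, map_sum]
  refine Finset.sum_subset (by simpa using h) fun r _ hr => ?_
  exact coeff_P_mul c r m (by simpa using hr) _

lemma ev_sub (c : ℂ) (G H : ℕ → PowerSeries A) :
    ev c (fun r => G r - H r) = ev c G - ev c H := by
  ext m
  simp [ev, mul_sub]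

lemma ev_smul (c : ℂ) (a : ℂ) (G : ℕ → PowerSeries A) :
    ev c (fun r => a • G r) = a • ev c G := by
  ext m
  simp only [ev, mul_smul_comm, ← Finset.smul_sum, coeff_mk, PowerSeries.coeff_smul]

lemma ev_mul_right (c : ℂ) (G : ℕ → PowerSeries A) (h : PowerSeries A) :
    ev c (fun r => G r * h) = ev c G * h := by
  ext m
  rw [coeff_ev c _ m (m + 1) (by omega)]
  simp only [← mul_assoc, ← Finset.sum_mul]
  rw [coeff_mul, coeff_mul]
  refine Finset.sum_congr rfl fun x hx => ?_
  have := Finset.HasAntidiagonal.mem_antidiagonal.1 hx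
  rw [coeff_ev c _ x.1 (m + 1) (by omega)]

lemma ev_mul_left (c : ℂ) (G : ℕ → PowerSeries A) (h : PowerSeries A) :
    ev c (fun r => h * G r) = h * ev c G := by
  ext m
  rw [coeff_ev c _ m (m + 1) (by omega)]
  simp only [← mul_assoc, P_comm c _ h]
  simp only [mul_assoc, ← Finset.mul_sum]
  rw [coeff_mul, coeff_mul]
  refine Finset.sum_congr rfl fun x hx => ?_
  have := Finset.HasAntidiagonal.mem_antidiagonal.1 hx
  rw [coeff_ev c _ x.2 (m + 1) (by omega)]

lemma ev_succ (c : ℂ) (G : ℕ → PowerSeries A) (h0 : G 0 = 0) :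
    X * ev c (fun r => G (r + 1)) = ev c G - c • (X * ev c G) := by
  ext m
  cases m with
  | zero => simp [ev, h0]
  | succ m =>
    rw [map_sub, PowerSeries.coeff_smul, coeff_succ_X_mul, coeff_succ_X_mul,
      coeff_ev c G (m + 1) (m + 1 + 1) (by omega), coeff_ev c G m (m + 1 + 1) (by omega),
      coeff_ev c _ m (m + 1) (by omega),
      Finset.sum_range_succ' _ (m + 1), h0, mul_zero, add_zero, ← coeff_succ_X_mul, ← coeff_succ_X_mul m (Finset.sum _ _),
      ← PowerSeries.coeff_smul, ← map_sub, Finset.mul_sum, Finset.mul_sum, Finset.smul_sum,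
      ← Finset.sum_sub_distrib]
    congr 1
    refine Finset.sum_congr rfl fun r _ => ?_
    rw [← mul_assoc, ← P_succ, sub_mul, smul_mul_assoc, mul_assoc]

lemma X_cancel {B : Type*} [Ring B] (a b : PowerSeries B) (h : X * a = X * b) : a = b := by
  ext m
  rw [← coeff_succ_X_mul, h, coeff_succ_X_mul]

variable {I : Type*}

/-- The shifted series. -/
noncomputable def ts (T : ℕ → I → I → A) (s : ℕ) (i j : I) : PowerSeries A :=
  ev (s : ℂ) fun r => C (T r i j)

lemma rel1 (T : ℕ → I → I → A)
    (h0 : ∀ i j x, T 0 i j * x = x * T 0 i j)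
    (hT : ∀ r s i j k l, (T (r + 1) i j * T s k l - T s k l * T (r + 1) i j)
      - (T r i j * T (s + 1) k l - T (s + 1) k l * T r i j)
      = T r k j * T s i l - T s k j * T r i l) (p s : ℕ) (i j k l : I) :
    X * (C (T (p + 1) i j) * ts T s k l - ts T s k l * C (T (p + 1) i j))
      - ((C (T p i j) * ts T s k l - ts T s k l * C (T p i j))
        - (s : ℂ) • (X * (C (T p i j) * ts T s k l - ts T s k l * C (T p i j))))
    = X * (C (T p k j) * ts T s i l - ts T s k j * C (T p i l)) := by
  have e : ∀ (q : ℕ) (i j k l : I), C (T q i j) * ts T s k l - ts T s k l * C (T q i j)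
      = ev (s : ℂ) (fun r => C (T q i j * T r k l - T r k l * T q i j)) := by
    intro q i j k l
    simp only [ts, map_sub, map_mul, ev_sub, ev_mul_left, ev_mul_right]
  rw [e, e, ← ev_succ, ← mul_sub, ← ev_sub]
  · simp only [ts, ← ev_mul_left, ← ev_mul_right, ← ev_sub, ← map_sub, ← map_mul, hT]
  · rw [h0]; simp

lemma rel2 (T : ℕ → I → I → A)
    (h0 : ∀ i j x, T 0 i j * x = x * T 0 i j)
    (hT : ∀ r s i j k l, (T (r + 1) i j * T s k l - T s k l * T (r + 1) i j)
      - (T r i j * T (s + 1) k l - T (s + 1) k l * T r i j)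
      = T r k j * T s i l - T s k j * T r i l) (s : ℕ) (i j k l : I) :
    ts T s i j * ts T (s + 1) k l - ts T (s + 1) k l * ts T s i j
      = ts T s k j * ts T (s + 1) i l - ts T (s + 1) k j * ts T s i l := by
  apply X_cancel
  have e : ts T s i j * ts T (s + 1) k l - ts T (s + 1) k l * ts T s i j
      = ev (s : ℂ) (fun p => C (T p i j) * ts T (s + 1) k l - ts T (s + 1) k l * C (T p i j)) := by
    rw [ev_sub, ev_mul_right, ev_mul_left]; rfl
  have e' : ts T s k j * ts T (s + 1) i l - ts T (s + 1) k j * ts T s i l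
      = ev (s : ℂ) (fun p => C (T p k j) * ts T (s + 1) i l - ts T (s + 1) k j * C (T p i l)) := by
    rw [ev_sub, ev_mul_right, ev_mul_left]; rfl
  rw [e, e', ← ev_mul_left _ (fun p => C (T p k j) * _ - _)]
  rw [show (fun r => X * (C (T r k j) * ts T (s + 1) i l - ts T (s + 1) k j * C (T r i l))) = _ from
    funext fun p => (rel1 T h0 hT p (s + 1) i j k l).symm]
  have gen : ∀ G : ℕ → PowerSeries A, G 0 = 0 → X * ev (s : ℂ) G
      = ev (s : ℂ) (fun p => X * G (p + 1) - (G p - ((s + 1 : ℕ) : ℂ) • (X * G p))) := by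
    intro G hG
    rw [ev_sub, ev_sub, ev_smul, ev_mul_left, ev_mul_left, ev_succ _ _ hG]
    push_cast
    module
  refine gen (fun p => C (T p i j) * ts T (s + 1) k l - ts T (s + 1) k l * C (T p i j)) ?_
  · refine sub_eq_zero.2 ?_
    refine central_of_coeff _ (fun m x => ?_) _
    rw [coeff_C]
    split_ifs
    · exact h0 _ _ _
    · simp

lemma eta_comm (x : PowerSeries (PowerSeries A)) :
    C (X : PowerSeries A) * x = x * C X := by
  refine central_of_coeff _ (fun m x => ?_) _
  rw [coeff_C]
  split_ifs
  · exact (PowerSeries.commute_X x).eq.symm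
  · simp

/-- the central variables -/
noncomputable def eta (A : Type*) [Ring A] [Algebra ℂ A] :
    Subring.center (PowerSeries (PowerSeries A)) :=
  ⟨C X, Subring.mem_center_iff.2 fun g => (eta_comm g).symm⟩

noncomputable def xi (A : Type*) [Ring A] [Algebra ℂ A] :
    Subring.center (PowerSeries (PowerSeries A)) :=
  ⟨X, Subring.mem_center_iff.2 fun g => (PowerSeries.commute_X g).eq⟩

noncomputable def Dz (A : Type*) [Ring A] [Algebra ℂ A] (a : ℤ) :
    Subring.center (PowerSeries (PowerSeries A)) :=
  eta A - xi A + a • (xi A * eta A)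

lemma Dz_smul (a : ℤ) (x : PowerSeries (PowerSeries A)) :
    Dz A a • x = C X * x - X * x + a • (X * (C X * x)) := by
  change ((C X - X + a • (X * C X) : PowerSeries (PowerSeries A))) * x = _
  rw [add_mul, sub_mul, smul_mul_assoc, mul_assoc]

lemma Dz_coeff_zero (a : ℤ) (x : PowerSeries (PowerSeries A)) :
    coeff 0 (Dz A a • x) = X * coeff 0 x := by
  rw [Dz_smul, map_add, map_sub, map_zsmul, coeff_C_mul, coeff_zero_X_mul, coeff_zero_X_mul]
  simp

lemma Dz_coeff_succ (a : ℤ) (p : ℕ) (x : PowerSeries (PowerSeries A)) :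
    coeff (p + 1) (Dz A a • x) = X * coeff (p + 1) x - coeff p x + a • (X * coeff p x) := by
  rw [Dz_smul, map_add, map_sub, map_zsmul, coeff_C_mul, coeff_succ_X_mul, coeff_succ_X_mul,
    coeff_C_mul]

lemma Dz_reg (a : ℤ) (x : PowerSeries (PowerSeries A)) (h : Dz A a • x = 0) : x = 0 := by
  ext1 p
  rw [map_zero]
  induction p with
  | zero =>
    apply X_cancel
    rw [← Dz_coeff_zero a, h]; simp
  | succ p ih =>
    apply X_cancel
    have := Dz_coeff_succ a p x
    rw [h, ih] at this
    simpa using this.symm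

lemma rel3 (T : ℕ → I → I → A)
    (h0 : ∀ i j x, T 0 i j * x = x * T 0 i j)
    (hT : ∀ r s i j k l, (T (r + 1) i j * T s k l - T s k l * T (r + 1) i j)
      - (T r i j * T (s + 1) k l - T (s + 1) k l * T r i j)
      = T r k j * T s i l - T s k j * T r i l) (s : ℕ) (i j k l : I) :
    Dz A s • ((PowerSeries.mk fun p => C (T p i j)) * C (ts T s k l)
        - C (ts T s k l) * (PowerSeries.mk fun p => C (T p i j)))
      = (xi A * eta A) • ((PowerSeries.mk fun p => C (T p k j)) * C (ts T s i l)
        - C (ts T s k j) * (PowerSeries.mk fun p => C (T p i l))) := by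
  ext1 p
  have e : ∀ x : PowerSeries (PowerSeries A), (xi A * eta A) • x = X * (C X * x) := by
    intro x
    change (X * C X) * x = _
    rw [mul_assoc]
  rw [e]
  cases p with
  | zero =>
    rw [Dz_coeff_zero, map_sub, coeff_mul_C, coeff_C_mul, coeff_mk, coeff_zero_X_mul,
      sub_eq_zero.2, mul_zero]
    refine central_of_coeff _ (fun m x => ?_) _
    rw [coeff_C]
    split_ifs
    · exact h0 _ _ _
    · simp
  | succ p =>
    rw [Dz_coeff_succ, coeff_succ_X_mul, coeff_C_mul]
    simp only [map_sub, coeff_mul_C, coeff_C_mul, coeff_mk]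
    rw [← rel1 T h0 hT]
    rw [natCast_zsmul, Nat.cast_smul_eq_nsmul]
    abel

end Concrete
end YangMinor

namespace YangMinor

section Final
open PowerSeries

variable {V : Type*} [AddCommGroup V] [Module ℂ V]

lemma mk_mulSer (f g : ℕ → Module.End ℂ V) :
    PowerSeries.mk (mulSer f g) = PowerSeries.mk f * PowerSeries.mk g := by
  ext1 m
  rw [coeff_mul, coeff_mk, mulSer,
    Finset.Nat.sum_antidiagonal_eq_sum_range_succ_mk]
  simp only [coeff_mk]
  rfl

lemma mk_prodSer (L : List (ℕ → Module.End ℂ V)) :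
    PowerSeries.mk (prodSer L) = (L.map PowerSeries.mk).prod := by
  induction L with
  | nil =>
    ext1 m
    simp only [prodSer, coeff_mk, List.map_nil, List.prod_nil, coeff_one]
    rfl
  | cons f L ih => rw [prodSer, mk_mulSer, ih, List.map_cons, List.prod_cons]

lemma mk_shiftSer (c : ℂ) (f : ℕ → Module.End ℂ V) :
    PowerSeries.mk (shiftSer c f) = ev c (fun r => C (f r)) := by
  ext1 m
  rw [coeff_mk, shiftSer, ev, coeff_mk, map_sum]
  refine Finset.sum_congr rfl fun r hr => ?_
  rw [coeff_mul_C, P, coeff_mk, if_pos (by simpa [Nat.lt_succ_iff] using hr), Algebra.smul_def]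

lemma mk_qminorSer {n : ℕ} (T : ℕ → Fin n → Fin n → Module.End ℂ V) (l : ℕ)
    (a b : Fin l → Fin n) :
    PowerSeries.mk (qminorSer T l a b) = Q (ts T) a b := by
  ext1 m
  rw [coeff_mk, qminorSer, Q, map_sum]
  refine Finset.sum_congr rfl fun σ _ => ?_
  rw [map_zsmul, Int.cast_smul_eq_zsmul]
  congr 1
  rw [← coeff_mk m (prodSer _), mk_prodSer, List.map_ofFn, wl]
  simp only [Function.comp_def, mk_shiftSer]
  rfl

lemma Q_map {S S' I : Type*} [Ring S] [Ring S'] {m : ℕ} (f : S →+* S') (t : ℕ → I → I → S)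
    (a b : Fin m → I) : f (Q t a b) = Q (fun s i j => f (t s i j)) a b := by
  rw [Q, Q, map_sum]
  refine Finset.sum_congr rfl fun σ _ => ?_
  rw [map_zsmul, map_list_prod, wl, wl, List.map_ofFn]
  rfl

end Final

end YangMinor

/-- Every coefficient of the series `t_{c_i d_j}(u)` commutes
with every coefficient of the quantum minor `t^{c_1⋯c_l}_{d_1⋯d_l}(v)`. -/
theorem tser_commutes_with_qminor
    (n : ℕ) {V : Type*} [AddCommGroup V] [Module ℂ V]
    (T : ℕ → Fin n → Fin n → (V →ₗ[ℂ] V)) (hT : IsYangianRep n T)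
    (l : ℕ) (c d : Fin l → Fin n) (i j : Fin l) (p q : ℕ) :
    T p (c i) (d j) ∘ₗ qminorSer T l c d q
      = qminorSer T l c d q ∘ₗ T p (c i) (d j) := by
  have h0 : ∀ (i j : Fin n) (x : Module.End ℂ V),
      (T 0 i j : Module.End ℂ V) * x = x * (T 0 i j : Module.End ℂ V) := by
    intro i j x
    rw [hT.1]
    split_ifs
    · rfl
    · exact (zero_mul x).trans (mul_zero x).symm
  have hR : ∀ (r s : ℕ) (i j k l : Fin n),
      ((T (r + 1) i j : Module.End ℂ V) * T s k l - T s k l * T (r + 1) i j : Module.End ℂ V)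
      - (T r i j * T (s + 1) k l - T (s + 1) k l * T r i j : Module.End ℂ V)
      = (T r k j * T s i l - T s k j * T r i l : Module.End ℂ V) := hT.2
  have main := YangMinor.core (K := Subring.center (PowerSeries (PowerSeries (Module.End ℂ V))))
    (S := PowerSeries (PowerSeries (Module.End ℂ V)))
    (fun x hx => by
      have h2 : (2 : ℂ) • x = 0 := by rw [two_smul]; exact hx
      have h3 : (2 : ℂ)⁻¹ • (2 : ℂ) • x = 0 := by rw [h2, smul_zero]
      rwa [smul_smul, inv_mul_cancel₀ two_ne_zero, one_smul] at h3)
    (fun s i j => PowerSeries.C (YangMinor.ts (A := Module.End ℂ V) T s i j))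
    (fun i j => PowerSeries.mk fun p => PowerSeries.C (T p i j : Module.End ℂ V))
    (fun s => YangMinor.Dz (Module.End ℂ V) s)
    (YangMinor.xi (Module.End ℂ V) * YangMinor.eta (Module.End ℂ V))
    (fun s => by simp only [YangMinor.Dz]; push_cast; rw [add_smul, one_smul]; abel)
    (fun s x hx => YangMinor.Dz_reg _ x hx)
    (fun x hx => YangMinor.Dz_reg (-1) x (by
      rw [← hx]; congr 1; simp only [YangMinor.Dz]; simp [sub_eq_add_neg]))
    (fun s i j k l => by
      simp only [← map_mul, ← map_sub]
      rw [YangMinor.rel2 (A := Module.End ℂ V) T h0 hR])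
    (fun s i j k l => YangMinor.rel3 (A := Module.End ℂ V) T h0 hR s i j k l)
    c d i j
  rw [← YangMinor.Q_map PowerSeries.C (YangMinor.ts (A := Module.End ℂ V) T)] at main
  have h1 := congrArg (PowerSeries.coeff p) main
  rw [PowerSeries.coeff_mul_C, PowerSeries.coeff_C_mul, PowerSeries.coeff_mk] at h1
  have h2 := congrArg (PowerSeries.coeff q) h1
  rw [PowerSeries.coeff_mul_C, PowerSeries.coeff_C_mul, ← YangMinor.mk_qminorSer,
    PowerSeries.coeff_mk] at h2
  exact h2
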